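/- arXiv:2108.00736 — 3 statements merged into one kernel-verified Lean document; each statement's English description precedes it below -/
import Mathlib

section
/- Schur orthogonality in vector form: for all ℓ, ℓ' with 2ℓ, 2ℓ' ∈ ℕ, all v, w ∈ ℂ^{2ℓ+1} and all v', w' ∈ ℂ^{2ℓ'+1}, one has ∫_{SU(2)} conj(⟨D^ℓ(g) v, w⟩) · ⟨D^{ℓ'}(g) v', w'⟩ dμ(g) = δ_{ℓ,ℓ'} · conj(⟨v, v'⟩) · ⟨w, w'⟩ / (2ℓ+1). -/
open scoped ComplexConjugate Matrix
open MeasureTheory Complex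

noncomputable section

/-- `SU(2)` realized as the subgroup of the `2 × 2` complex unitary group consisting of the
matrices of determinant one; its elements are exactly the matrices
`h(α,β) = !![α, -conj β; β, conj α]` with `|α|² + |β|² = 1`. -/
def SU2 : Subgroup (Matrix.unitaryGroup (Fin 2) ℂ) where
  carrier := {A | (A : Matrix (Fin 2) (Fin 2) ℂ).det = 1}
  mul_mem' := by
    intro A B hA hB
    simp only [Set.mem_setOf_eq] at *
    simp [Matrix.UnitaryGroup.mul_val, Matrix.det_mul, hA, hB]
  one_mem' := by simp [Set.mem_setOf_eq]
  inv_mem' := by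
    intro A hA
    simp only [Set.mem_setOf_eq] at *
    simp [Matrix.UnitaryGroup.inv_val, Matrix.star_eq_conjTranspose, Matrix.det_conjTranspose, hA]

instance : MeasurableSpace SU2 := borel SU2
instance : BorelSpace SU2 := ⟨rfl⟩

/-- The matrix `h(α,β)`. -/
def h (a b : ℂ) : Matrix (Fin 2) (Fin 2) ℂ := !![a, -conj b; b, conj a]

/-- The entry `α` of an element `g = h(α,β)` of `SU(2)`. -/
def ga (g : SU2) : ℂ := g.1.1 0 0

/-- The entry `β` of an element `g = h(α,β)` of `SU(2)`. -/
def gb (g : SU2) : ℂ := g.1.1 1 0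

/-- `IsWigner n D` states that `D` is the family of Wigner functions `D^ℓ_{m,s}` for `ℓ = n/2`,
where the row index `j` corresponds to `m = j - ℓ` and the column index `k` to `s = k - ℓ`:
for every `g = h(α,β) ∈ SU(2)` and all `z₀ z₁ : ℂ`,
`∑ⱼ √(binom n j) z₀^j z₁^(n-j) D j k g = √(binom n k) (conj α z₀ + conj β z₁)^k (-β z₀ + α z₁)^(n-k)`. -/
def IsWigner (n : ℕ) (D : Fin (n + 1) → Fin (n + 1) → SU2 → ℂ) : Prop :=
  ∀ (g : SU2) (k : Fin (n + 1)) (z₀ z₁ : ℂ),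
    ∑ j : Fin (n + 1),
        (Real.sqrt (n.choose (j : ℕ)) : ℂ) * z₀ ^ (j : ℕ) * z₁ ^ (n - (j : ℕ)) * D j k g
      = (Real.sqrt (n.choose (k : ℕ)) : ℂ) * (conj (ga g) * z₀ + conj (gb g) * z₁) ^ (k : ℕ)
          * (-(gb g) * z₀ + ga g * z₁) ^ (n - (k : ℕ))

/-- The action of the Wigner matrix `D^ℓ(g)` on a vector `v ∈ ℂ^{2ℓ+1}`. -/
def DVec {n : ℕ} (D : Fin (n + 1) → Fin (n + 1) → SU2 → ℂ) (g : SU2)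
    (v : Fin (n + 1) → ℂ) : Fin (n + 1) → ℂ :=
  fun j => ∑ k, D j k g * v k

/-- The Hermitian inner product `⟨v,w⟩ = ∑ₖ conj (v k) * (w k)` on `ℂ^N`. -/
def herm {N : ℕ} (v w : Fin N → ℂ) : ℂ := ∑ r, conj (v r) * w r

/-!
Write `v(z)` for the vector with entries `√(n choose j) z₀ʲ z₁ⁿ⁻ʲ`, where `n = 2ℓ`. The defining
identity says `v(z) D(g) = v(gᴴ z)`. The vectors `v(z)` span and satisfy `v(z) ⬝ v(w) = (z ⬝ w)ⁿ`,
so `D` is a continuous unitary representation of `SU(2)`. Every `z` is a multiple of some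
`gᴴ (1, 0)`, so an intertwiner `A` from `D` to `D'` is determined by its value at the highest weight
vector `v(1, 0)`. Comparing weights under the diagonal torus, `A` vanishes if `ℓ ≠ ℓ'` and is a
scalar if `D = D'`. This applies to the average `∫ D(g) X D'(g)ᴴ dμ(g)` with `X = v v'ᴴ`, an
intertwiner by invariance of `μ` and with the trace of `X` if `D = D'`; its sesquilinear form at
`(w, w')` is the integral to be computed.
-/

/-- `A`, as a linear map from the space of `σ` to the space of `ρ`, commutes with the action
of `G`. -/
def Intertwines {G ι κ : Type*} [Group G] [Fintype ι] [DecidableEq ι] [Fintype κ] [DecidableEq κ]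
    (ρ : G →* Matrix.unitaryGroup ι ℂ) (σ : G →* Matrix.unitaryGroup κ ℂ)
    (A : Matrix ι κ ℂ) : Prop :=
  ∀ g, (ρ g : Matrix ι ι ℂ) * A = A * (σ g : Matrix κ κ ℂ)

theorem Intertwines.conjTranspose {G ι κ : Type*} [Group G] [Fintype ι] [DecidableEq ι]
    [Fintype κ] [DecidableEq κ] {ρ : G →* Matrix.unitaryGroup ι ℂ}
    {σ : G →* Matrix.unitaryGroup κ ℂ} {A : Matrix ι κ ℂ} (hA : Intertwines ρ σ A) :
    Intertwines σ ρ Aᴴ := by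
  intro g
  have hinv := congrArg Matrix.conjTranspose (hA g⁻¹)
  simp only [map_inv, Matrix.UnitaryGroup.inv_val, Matrix.conjTranspose_mul,
    Matrix.star_eq_conjTranspose, Matrix.conjTranspose_conjTranspose] at hinv
  exact hinv.symm

/-- The average `∫ ρ(g) X σ(g)ᴴ dμ(g)` of the matrix `X` over `G`, which for an invariant `μ`
intertwines the unitary representations `ρ` and `σ`. The norm on matrices only serves to form the
Bochner integral. -/
def twirl {G ι κ : Type*} [Group G] [MeasurableSpace G] [Fintype ι] [DecidableEq ι] [Fintype κ]
    [DecidableEq κ] (μ : Measure G) (ρ : G →* Matrix.unitaryGroup ι ℂ)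
    (σ : G →* Matrix.unitaryGroup κ ℂ) (X : Matrix ι κ ℂ) : Matrix ι κ ℂ :=
  open scoped Matrix.Norms.L2Operator in
  ∫ g, (ρ g : Matrix ι ι ℂ) * X * (σ g : Matrix κ κ ℂ)ᴴ ∂μ

theorem norm_coe_unitary_le_one {E : Type*} [NormedRing E] [StarRing E] [CStarRing E]
    (U : unitary E) : ‖(U : E)‖ ≤ 1 := by
  cases subsingleton_or_nontrivial E
  · simp [Subsingleton.elim (U : E) 0]
  · exact (CStarRing.norm_coe_unitary U).le

section Twirl

open scoped Matrix.Norms.L2Operator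

variable {G ι κ : Type*} [Group G] [TopologicalSpace G] [MeasurableSpace G]
  [OpensMeasurableSpace G] [Fintype ι] [DecidableEq ι] [Fintype κ] [DecidableEq κ] {μ : Measure G}
  {ρ : G →* Matrix.unitaryGroup ι ℂ} {σ : G →* Matrix.unitaryGroup κ ℂ}

theorem integrable_mul_mul_conjTranspose [IsFiniteMeasure μ] (hρ : Continuous ρ)
    (hσ : Continuous σ) (X : Matrix ι κ ℂ) :
    Integrable (fun g ↦ (ρ g : Matrix ι ι ℂ) * X * (σ g : Matrix κ κ ℂ)ᴴ) μ := by
  have : ProperSpace (Matrix ι κ ℂ) := FiniteDimensional.proper ℂ _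
  have hcont : Continuous fun g ↦ (ρ g : Matrix ι ι ℂ) * X * (σ g : Matrix κ κ ℂ)ᴴ := by
    fun_prop
  refine .of_bound hcont.aestronglyMeasurable ‖X‖ (.of_forall fun g ↦ ?_)
  calc ‖(ρ g : Matrix ι ι ℂ) * X * (σ g : Matrix κ κ ℂ)ᴴ‖
      ≤ ‖(ρ g : Matrix ι ι ℂ)‖ * ‖X‖ * ‖(σ g : Matrix κ κ ℂ)ᴴ‖ :=
        (Matrix.l2_opNorm_mul _ _).trans (by gcongr; exact Matrix.l2_opNorm_mul _ _)
    _ ≤ 1 * ‖X‖ * 1 := by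
        rw [Matrix.l2_opNorm_conjTranspose]
        gcongr <;> exact norm_coe_unitary_le_one _
    _ = ‖X‖ := by simp

theorem map_twirl {E : Type*} [NormedAddCommGroup E] [NormedSpace ℂ E] [CompleteSpace E]
    [IsFiniteMeasure μ] (hρ : Continuous ρ) (hσ : Continuous σ) (L : Matrix ι κ ℂ →ₗ[ℂ] E)
    (X : Matrix ι κ ℂ) :
    L (twirl μ ρ σ X) = ∫ g, L ((ρ g : Matrix ι ι ℂ) * X * (σ g : Matrix κ κ ℂ)ᴴ) ∂μ :=
  (L.toContinuousLinearMap.integral_comp_comm (integrable_mul_mul_conjTranspose hρ hσ X)).symm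

theorem intertwines_twirl [MeasurableMul G] [IsFiniteMeasure μ] [μ.IsMulLeftInvariant]
    (hρ : Continuous ρ) (hσ : Continuous σ) (X : Matrix ι κ ℂ) :
    Intertwines ρ σ (twirl μ ρ σ X) := by
  intro x
  have hσx : (σ x : Matrix κ κ ℂ)ᴴ * σ x = 1 := Matrix.UnitaryGroup.star_mul_self (σ x)
  have hinv : (ρ x : Matrix ι ι ℂ) * twirl μ ρ σ X * (σ x : Matrix κ κ ℂ)ᴴ = twirl μ ρ σ X :=
    calc (ρ x : Matrix ι ι ℂ) * twirl μ ρ σ X * (σ x : Matrix κ κ ℂ)ᴴ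
        = ∫ g, (ρ x : Matrix ι ι ℂ) * ((ρ g : Matrix ι ι ℂ) * X * (σ g : Matrix κ κ ℂ)ᴴ) *
            (σ x : Matrix κ κ ℂ)ᴴ ∂μ :=
          map_twirl hρ hσ (mulRightLinearMap ι ℂ (σ x : Matrix κ κ ℂ)ᴴ ∘ₗ
            mulLeftLinearMap κ ℂ (ρ x : Matrix ι ι ℂ)) X
      _ = ∫ g, (ρ (x * g) : Matrix ι ι ℂ) * X * (σ (x * g) : Matrix κ κ ℂ)ᴴ ∂μ := by
          simp only [map_mul, Matrix.UnitaryGroup.mul_val, Matrix.conjTranspose_mul,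
            Matrix.mul_assoc]
      _ = twirl μ ρ σ X := integral_mul_left_eq_self
          (fun g ↦ (ρ g : Matrix ι ι ℂ) * X * (σ g : Matrix κ κ ℂ)ᴴ) x
  rw [← hinv, Matrix.mul_assoc _ _ (σ x : Matrix κ κ ℂ), hσx, Matrix.mul_one, hinv]

theorem trace_twirl [IsProbabilityMeasure μ] (hρ : Continuous ρ) (X : Matrix ι ι ℂ) :
    (twirl μ ρ ρ X).trace = X.trace := by
  have htrace (g : G) : ((ρ g : Matrix ι ι ℂ) * X * (ρ g : Matrix ι ι ℂ)ᴴ).trace = X.trace := by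
    have hρg : (ρ g : Matrix ι ι ℂ)ᴴ * ρ g = 1 := Matrix.UnitaryGroup.star_mul_self (ρ g)
    rw [Matrix.trace_mul_comm, ← Matrix.mul_assoc, hρg, Matrix.one_mul]
  calc (twirl μ ρ ρ X).trace
      = ∫ g, ((ρ g : Matrix ι ι ℂ) * X * (ρ g : Matrix ι ι ℂ)ᴴ).trace ∂μ :=
        map_twirl hρ hρ (Matrix.traceLinearMap ι ℂ ℂ) X
    _ = X.trace := by simp [htrace]

theorem integral_conj_coeff_mul_coeff [IsFiniteMeasure μ] (hρ : Continuous ρ) (hσ : Continuous σ)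
    (v w : ι → ℂ) (v' w' : κ → ℂ) :
    ∫ g, conj (star ((ρ g : Matrix ι ι ℂ) *ᵥ v) ⬝ᵥ w) *
        (star ((σ g : Matrix κ κ ℂ) *ᵥ v') ⬝ᵥ w') ∂μ
      = star w ⬝ᵥ twirl μ ρ σ (Matrix.vecMulVec v (star v')) *ᵥ w' := by
  have hcoeff (g : G) : conj (star ((ρ g : Matrix ι ι ℂ) *ᵥ v) ⬝ᵥ w) *
      (star ((σ g : Matrix κ κ ℂ) *ᵥ v') ⬝ᵥ w') = star w ⬝ᵥ
        ((ρ g : Matrix ι ι ℂ) * Matrix.vecMulVec v (star v') * (σ g : Matrix κ κ ℂ)ᴴ) *ᵥ w' := by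
    have hconj : conj (star ((ρ g : Matrix ι ι ℂ) *ᵥ v) ⬝ᵥ w) =
        star w ⬝ᵥ (ρ g : Matrix ι ι ℂ) *ᵥ v := (Matrix.star_dotProduct _ _).symm
    rw [hconj, Matrix.star_mulVec]
    simp [Matrix.mul_vecMulVec, Matrix.vecMulVec_mul, Matrix.vecMulVec_mulVec, mul_comm]
  simp_rw [hcoeff]
  exact (map_twirl hρ hσ (dotProductBilin ℂ ℂ (star w) ∘ₗ (Matrix.mulVecBilin ℂ ℂ).flip w') _).symm

theorem twirl_eq_smul_one [Nonempty ι] [MeasurableMul G] [IsProbabilityMeasure μ]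
    [μ.IsMulLeftInvariant] (hρ : Continuous ρ)
    (hcomm : ∀ A, Intertwines ρ ρ A → ∃ c : ℂ, A = c • 1)
    (X : Matrix ι ι ℂ) : twirl μ ρ ρ X = (X.trace / Fintype.card ι) • 1 := by
  obtain ⟨c, hc⟩ := hcomm _ (intertwines_twirl (μ := μ) hρ hρ X)
  have hX := trace_twirl (μ := μ) hρ X
  rw [hc, Matrix.trace_smul, Matrix.trace_one, smul_eq_mul] at hX
  rw [hc, ← hX, mul_div_cancel_right₀ c (by simp)]

end Twirl

/-- The Veronese vector of `z`, with entries `√(n choose j) z₀ʲ z₁ⁿ⁻ʲ`; the weights make its Gram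
kernel the `n`-th power of that of `ℂ²`. -/
def veronese (n : ℕ) (z : Fin 2 → ℂ) : Fin (n + 1) → ℂ :=
  fun j ↦ (Real.sqrt (n.choose j) : ℂ) * z 0 ^ (j : ℕ) * z 1 ^ (n - (j : ℕ))

section Veronese

variable {n : ℕ} {m : Type*}

theorem veronese_dotProduct (z w : Fin 2 → ℂ) :
    veronese n z ⬝ᵥ veronese n w = (z ⬝ᵥ w) ^ n := by
  have hsq (j : ℕ) : (n.choose j : ℂ) = (Real.sqrt (n.choose j) : ℂ) * Real.sqrt (n.choose j) := by
    rw [← Complex.ofReal_mul, Real.mul_self_sqrt (Nat.cast_nonneg _), Complex.ofReal_natCast]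
  rw [dotProduct, dotProduct, Fin.sum_univ_two, add_pow, Finset.sum_range]
  refine Finset.sum_congr rfl fun j _ ↦ ?_
  rw [hsq, veronese, veronese, mul_pow, mul_pow]
  ring

theorem star_veronese (z : Fin 2 → ℂ) : star (veronese n z) = veronese n (star z) := by
  ext j
  simp [veronese]

theorem veronese_smul (c : ℂ) (z : Fin 2 → ℂ) : veronese n (c • z) = c ^ n • veronese n z := by
  ext j
  have hc : c ^ n = c ^ (j : ℕ) * c ^ (n - (j : ℕ)) := by
    rw [← pow_add, Nat.add_sub_cancel' j.is_le]
  simp only [veronese, Pi.smul_apply, smul_eq_mul, mul_pow, hc]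
  ring

theorem veronese_one_zero : veronese n ![1, 0] = Pi.single (Fin.last n) 1 := by
  ext j
  obtain rfl | hj := eq_or_ne j (Fin.last n)
  · simp [veronese]
  · have hexp : n - (j : ℕ) ≠ 0 := (Nat.sub_pos_of_lt (Fin.val_lt_last hj)).ne'
    simp [veronese, hj, hexp]

theorem span_range_veronese : Submodule.span ℂ (Set.range (veronese n)) = ⊤ := by
  set A : Matrix (Fin (n + 1)) (Fin (n + 1)) ℂ :=
    .vandermonde (fun i ↦ (i : ℂ)) * .diagonal fun j ↦ (Real.sqrt (n.choose j) : ℂ) with hA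
  have hrow (i : Fin (n + 1)) : A.row i = veronese n ![(i : ℂ), 1] := by
    ext j
    simp [hA, veronese, mul_comm]
  have hdet : A.det ≠ 0 := by
    rw [Matrix.det_mul, Matrix.det_diagonal]
    refine mul_ne_zero (Matrix.det_vandermonde_ne_zero_iff.mpr
      (Nat.cast_injective.comp Fin.val_injective)) (Finset.prod_ne_zero_iff.mpr fun j _ ↦ ?_)
    simp [Nat.choose_eq_zero_iff, j.is_le]
  have hspan := (Matrix.linearIndependent_rows_of_det_ne_zero hdet).span_eq_top_of_card_eq_finrank
    (by simp)
  rw [eq_top_iff, ← hspan]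
  gcongr
  rintro _ ⟨i, rfl⟩
  exact ⟨_, (hrow i).symm⟩

theorem ext_veronese_vecMul {A B : Matrix (Fin (n + 1)) m ℂ}
    (hAB : ∀ z, veronese n z ᵥ* A = veronese n z ᵥ* B) : A = B := by
  have hlin : A.vecMulLinear = B.vecMulLinear := LinearMap.ext_on_range span_range_veronese hAB
  ext i j
  simpa using congrFun (LinearMap.congr_fun hlin (Pi.single i 1)) j

theorem ext_dotProduct_star_veronese {a b : Fin (n + 1) → ℂ}
    (hab : ∀ w, a ⬝ᵥ star (veronese n w) = b ⬝ᵥ star (veronese n w)) : a = b := by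
  have hlin : dotProductBilin ℂ ℂ a = dotProductBilin ℂ ℂ b :=
    LinearMap.ext_on_range span_range_veronese fun z ↦ by
      simpa [star_veronese] using hab (star z)
  exact dotProduct_eq a b fun u ↦ LinearMap.congr_fun hlin u

end Veronese

section SU2

theorem continuous_ga : Continuous ga :=
  (continuous_subtype_val.comp continuous_subtype_val).matrix_elem 0 0

theorem continuous_gb : Continuous gb :=
  (continuous_subtype_val.comp continuous_subtype_val).matrix_elem 1 0

theorem conjTranspose_eq_adjugate (g : SU2) : g.1.1ᴴ = g.1.1.adjugate := by
  have hdet : g.1.1.det = 1 := g.2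
  have hg : g.1.1ᴴ * g.1.1 = 1 := Matrix.UnitaryGroup.star_mul_self g.1
  exact left_inv_eq_right_inv hg (by rw [Matrix.mul_adjugate, hdet, one_smul])

theorem conjTranspose_mulVec (g : SU2) (z : Fin 2 → ℂ) :
    g.1.1ᴴ *ᵥ z = ![conj (ga g) * z 0 + conj (gb g) * z 1, -gb g * z 0 + ga g * z 1] := by
  have h10 : g.1.1ᴴ 1 0 = -gb g := by
    rw [conjTranspose_eq_adjugate, Matrix.adjugate_fin_two]
    simp [gb]
  have h11 : g.1.1ᴴ 1 1 = ga g := by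
    rw [conjTranspose_eq_adjugate, Matrix.adjugate_fin_two]
    simp [ga]
  ext i
  fin_cases i
  · simp [Matrix.mulVec, dotProduct, ga, gb]
  · simp only [Matrix.mulVec, dotProduct, Fin.sum_univ_two]
    simp [-Matrix.conjTranspose_apply, h10, h11]

theorem conjTranspose_mulVec_dotProduct_star (g : SU2) (z w : Fin 2 → ℂ) :
    (g.1.1ᴴ *ᵥ z) ⬝ᵥ star (g.1.1ᴴ *ᵥ w) = z ⬝ᵥ star w := by
  have hg : g.1.1 * g.1.1ᴴ = 1 := Matrix.mem_unitaryGroup_iff.mp g.1.2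
  rw [Matrix.star_mulVec, Matrix.conjTranspose_conjTranspose, dotProduct_comm,
    Matrix.dotProduct_mulVec, Matrix.vecMul_vecMul, hg, Matrix.vecMul_one, dotProduct_comm]

theorem exists_mul_conj_eq_one_and_pow_ne_one {d : ℕ} (hd : d ≠ 0) :
    ∃ a : ℂ, a * conj a = 1 ∧ a ^ d ≠ 1 := by
  refine ⟨exp ((Real.pi / d : ℝ) * I), ?_, ?_⟩
  · rw [mul_conj, normSq_eq_norm_sq, norm_exp_ofReal_mul_I, one_pow, ofReal_one]
  · have hpi : (d : ℂ) * ((Real.pi / d : ℝ) * I) = Real.pi * I := by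
      push_cast
      field_simp
    rw [← exp_nat_mul, hpi, exp_pi_mul_I]
    norm_num

theorem exists_ga_eq_gb_eq {a b : ℂ} (hab : a * conj a + b * conj b = 1) :
    ∃ g : SU2, ga g = a ∧ gb g = b := by
  have hdet : (h a b).det = 1 := by
    rw [h, Matrix.det_fin_two_of]
    linear_combination hab
  have hstar : star (h a b) = (h a b).adjugate := by
    rw [h, Matrix.adjugate_fin_two_of]
    ext i j
    fin_cases i <;> fin_cases j <;> simp
  have hu : h a b ∈ Matrix.unitaryGroup (Fin 2) ℂ := by
    rw [Matrix.mem_unitaryGroup_iff', hstar, Matrix.adjugate_mul, hdet, one_smul]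
  exact ⟨⟨⟨h a b, hu⟩, hdet⟩, by simp [ga, h], by simp [gb, h]⟩

theorem exists_smul_conjTranspose_mulVec_eq (z : Fin 2 → ℂ) :
    ∃ (c : ℂ) (g : SU2), c • (g.1.1ᴴ *ᵥ ![1, 0]) = z := by
  obtain rfl | hz := eq_or_ne z 0
  · exact ⟨0, 1, zero_smul ℂ _⟩
  obtain ⟨r, hr, hrz⟩ : ∃ r : ℝ, r ≠ 0 ∧ (r : ℂ) * r = z 0 * conj (z 0) + z 1 * conj (z 1) := by
    have hsum : 0 < normSq (z 0) + normSq (z 1) := by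
      contrapose! hz
      have h0 := normSq_nonneg (z 0)
      have h1 := normSq_nonneg (z 1)
      exact funext <| Fin.forall_fin_two.mpr
        ⟨normSq_eq_zero.mp (by linarith), normSq_eq_zero.mp (by linarith)⟩
    refine ⟨√(normSq (z 0) + normSq (z 1)), (Real.sqrt_pos.mpr hsum).ne', ?_⟩
    rw [← ofReal_mul, Real.mul_self_sqrt hsum.le, ofReal_add, mul_conj, mul_conj]
  have hr' : (r : ℂ) ≠ 0 := ofReal_ne_zero.mpr hr
  obtain ⟨g, ha, hb⟩ := exists_ga_eq_gb_eq (a := conj (z 0) / r) (b := -z 1 / r) (by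
    simp only [map_div₀, map_neg, conj_conj, conj_ofReal]
    field_simp
    linear_combination -hrz)
  refine ⟨r, g, ?_⟩
  rw [conjTranspose_mulVec, ha, hb]
  ext i
  fin_cases i
  · simp [mul_div_cancel₀ _ hr']
  · simp [mul_div_cancel₀ _ hr']

end SU2

/-- The Wigner matrix `D^ℓ(g)`, with rows indexed by `m` and columns by `s`. -/
def wignerMatrix {n : ℕ} (D : Fin (n + 1) → Fin (n + 1) → SU2 → ℂ) (g : SU2) :
    Matrix (Fin (n + 1)) (Fin (n + 1)) ℂ :=
  .of fun j k ↦ D j k g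

namespace IsWigner

variable {n : ℕ} {D : Fin (n + 1) → Fin (n + 1) → SU2 → ℂ}

theorem veronese_vecMul (hD : IsWigner n D) (g : SU2) (z : Fin 2 → ℂ) :
    veronese n z ᵥ* wignerMatrix D g = veronese n (g.1.1ᴴ *ᵥ z) := by
  ext k
  rw [conjTranspose_mulVec]
  exact hD g k (z 0) (z 1)

theorem unique {D' : Fin (n + 1) → Fin (n + 1) → SU2 → ℂ} (hD : IsWigner n D)
    (hD' : IsWigner n D') : D = D' := by
  have hmat (g : SU2) : wignerMatrix D g = wignerMatrix D' g :=
    ext_veronese_vecMul fun z ↦ by rw [hD.veronese_vecMul, hD'.veronese_vecMul]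
  exact funext₃ fun j k g ↦ congrFun₂ (hmat g) j k

theorem wignerMatrix_mul (hD : IsWigner n D) (g g' : SU2) :
    wignerMatrix D (g * g') = wignerMatrix D g * wignerMatrix D g' :=
  ext_veronese_vecMul fun z ↦ by
    rw [← Matrix.vecMul_vecMul, hD.veronese_vecMul, hD.veronese_vecMul, hD.veronese_vecMul,
      Matrix.mulVec_mulVec, ← Matrix.conjTranspose_mul]
    rfl

theorem wignerMatrix_one (hD : IsWigner n D) : wignerMatrix D 1 = 1 :=
  ext_veronese_vecMul fun z ↦ by simp [hD.veronese_vecMul]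

theorem wignerMatrix_mem_unitaryGroup (hD : IsWigner n D) (g : SU2) :
    wignerMatrix D g ∈ Matrix.unitaryGroup (Fin (n + 1)) ℂ := by
  rw [Matrix.mem_unitaryGroup_iff]
  refine ext_veronese_vecMul fun z ↦ ext_dotProduct_star_veronese fun w ↦ ?_
  calc veronese n z ᵥ* (wignerMatrix D g * (wignerMatrix D g)ᴴ) ⬝ᵥ star (veronese n w)
      = (veronese n z ᵥ* wignerMatrix D g) ⬝ᵥ star (veronese n w ᵥ* wignerMatrix D g) := by
        rw [Matrix.star_vecMul, Matrix.dotProduct_mulVec, Matrix.vecMul_vecMul]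
    _ = ((g.1.1ᴴ *ᵥ z) ⬝ᵥ star (g.1.1ᴴ *ᵥ w)) ^ n := by
        rw [hD.veronese_vecMul, hD.veronese_vecMul, star_veronese, veronese_dotProduct]
    _ = veronese n z ᵥ* 1 ⬝ᵥ star (veronese n w) := by
        rw [conjTranspose_mulVec_dotProduct_star, Matrix.vecMul_one, star_veronese,
          veronese_dotProduct]

/-- The unitary representation `g ↦ D^ℓ(g)` of `SU(2)`. -/
def rep (hD : IsWigner n D) : SU2 →* Matrix.unitaryGroup (Fin (n + 1)) ℂ where
  toFun g := ⟨wignerMatrix D g, hD.wignerMatrix_mem_unitaryGroup g⟩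
  map_one' := Subtype.ext hD.wignerMatrix_one
  map_mul' g g' := Subtype.ext (hD.wignerMatrix_mul g g')

theorem coe_rep (hD : IsWigner n D) (g : SU2) :
    (hD.rep g : Matrix (Fin (n + 1)) (Fin (n + 1)) ℂ) = wignerMatrix D g := rfl

theorem continuous_rep (hD : IsWigner n D) : Continuous hD.rep := by
  have hvecMul (x : Fin (n + 1) → ℂ) : Continuous fun g ↦ x ᵥ* wignerMatrix D g := by
    have hx : x ∈ Submodule.span ℂ (Set.range (veronese n)) := by simp [span_range_veronese]
    induction hx using Submodule.span_induction with
    | mem x hx =>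
      obtain ⟨z, rfl⟩ := hx
      simp only [hD.veronese_vecMul, conjTranspose_mulVec]
      have := continuous_ga
      have := continuous_gb
      refine continuous_pi fun j ↦ ?_
      simp only [veronese, Matrix.cons_val_zero, Matrix.cons_val_one]
      fun_prop
    | zero => simpa using continuous_const
    | add x y _ _ hx hy => simpa only [Matrix.add_vecMul] using! hx.add hy
    | smul c x _ hx => simpa only [Matrix.smul_vecMul] using! hx.const_smul c
  refine continuous_induced_rng.mpr (continuous_matrix fun j k ↦ ?_)
  simpa only [Matrix.single_one_vecMul] using! (continuous_pi_iff.mp (hvecMul (Pi.single j 1))) k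

theorem wignerMatrix_eq_diagonal (hD : IsWigner n D) {g : SU2} (hg : gb g = 0) :
    wignerMatrix D g = .diagonal fun k ↦ conj (ga g) ^ (k : ℕ) * ga g ^ (n - (k : ℕ)) :=
  ext_veronese_vecMul fun z ↦ by
    ext k
    rw [hD.veronese_vecMul, conjTranspose_mulVec, hg, Matrix.vecMul_diagonal]
    simp only [veronese, Matrix.cons_val_zero, Matrix.cons_val_one, map_zero, zero_mul, neg_zero,
      add_zero, zero_add, mul_pow]
    ring

variable {n' : ℕ} {D' : Fin (n' + 1) → Fin (n' + 1) → SU2 → ℂ}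
  {A B : Matrix (Fin (n + 1)) (Fin (n' + 1)) ℂ}

-- The last row of `A` is the image of the highest weight vector `veronese n ![1, 0]`, whose
-- translates are, up to scalars, all the Veronese vectors.
theorem eq_of_row_last_eq (hD : IsWigner n D) (hD' : IsWigner n' D')
    (hA : Intertwines hD.rep hD'.rep A) (hB : Intertwines hD.rep hD'.rep B)
    (hAB : A.row (Fin.last n) = B.row (Fin.last n)) : A = B := by
  refine ext_veronese_vecMul fun z ↦ ?_
  obtain ⟨c, g, rfl⟩ := exists_smul_conjTranspose_mulVec_eq z
  have horbit {C : Matrix (Fin (n + 1)) (Fin (n' + 1)) ℂ} (hC : Intertwines hD.rep hD'.rep C) :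
      veronese n (g.1.1ᴴ *ᵥ ![1, 0]) ᵥ* C = C.row (Fin.last n) ᵥ* wignerMatrix D' g := by
    rw [← hD.veronese_vecMul, Matrix.vecMul_vecMul, ← coe_rep hD, hC g, ← Matrix.vecMul_vecMul,
      veronese_one_zero, Matrix.single_one_vecMul, coe_rep]
  simp only [veronese_smul, Matrix.smul_vecMul, horbit hA, horbit hB, hAB]

-- `A` respects the weights of the diagonal torus, which are `n` for the last row and
-- `2 * k - n' < n` for column `k`.
theorem row_last_apply_eq_zero (hD : IsWigner n D) (hD' : IsWigner n' D')
    (hA : Intertwines hD.rep hD'.rep A) {k : Fin (n' + 1)} (hk : (k : ℕ) < n) :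
    A (Fin.last n) k = 0 := by
  obtain ⟨a, ha, had⟩ := exists_mul_conj_eq_one_and_pow_ne_one (d := (n' - k) + (n - k)) (by omega)
  obtain ⟨t, rfl, ht⟩ := exists_ga_eq_gb_eq (a := a) (b := 0) (by simpa using ha)
  have hweight : conj (ga t) ^ n * A (Fin.last n) k =
      A (Fin.last n) k * (conj (ga t) ^ (k : ℕ) * ga t ^ (n' - k)) := by
    simpa [coe_rep, wignerMatrix_eq_diagonal, ht, hD, hD'] using congrFun₂ (hA t) (Fin.last n) k
  have hconj (i : ℕ) : ga t ^ i * conj (ga t) ^ i = 1 := by rw [← mul_pow, ha, one_pow]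
  have hpow : ga t ^ n = ga t ^ (k : ℕ) * ga t ^ (n - k) := by
    rw [← pow_add, Nat.add_sub_cancel' hk.le]
  have hfix : A (Fin.last n) k = A (Fin.last n) k * ga t ^ ((n' - k) + (n - k)) :=
    calc A (Fin.last n) k = ga t ^ n * (conj (ga t) ^ n * A (Fin.last n) k) := by
          rw [← mul_assoc, hconj, one_mul]
      _ = (ga t ^ (k : ℕ) * conj (ga t) ^ (k : ℕ)) * (A (Fin.last n) k *
            ga t ^ ((n' - k) + (n - k))) := by
          rw [hweight, hpow, pow_add]
          ring
      _ = A (Fin.last n) k * ga t ^ ((n' - k) + (n - k)) := by rw [hconj, one_mul]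
  by_contra hne
  exact had (mul_left_cancel₀ hne (by rw [← hfix, mul_one]))

theorem eq_zero_of_lt (hD : IsWigner n D) (hD' : IsWigner n' D') (hn : n' < n)
    (hA : Intertwines hD.rep hD'.rep A) : A = 0 :=
  hD.eq_of_row_last_eq hD' hA (fun g ↦ by simp) <| funext fun k ↦
    hD.row_last_apply_eq_zero hD' hA (k.is_le.trans_lt hn)

theorem eq_zero_of_ne (hD : IsWigner n D) (hD' : IsWigner n' D') (hn : n ≠ n')
    (hA : Intertwines hD.rep hD'.rep A) : A = 0 := by
  obtain hlt | hlt := hn.lt_or_gt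
  · exact Matrix.conjTranspose_eq_zero.mp (hD'.eq_zero_of_lt hD hlt hA.conjTranspose)
  · exact hD.eq_zero_of_lt hD' hlt hA

theorem exists_eq_smul_one (hD : IsWigner n D) {A : Matrix (Fin (n + 1)) (Fin (n + 1)) ℂ}
    (hA : Intertwines hD.rep hD.rep A) : ∃ c : ℂ, A = c • 1 := by
  refine ⟨A (Fin.last n) (Fin.last n), hD.eq_of_row_last_eq hD hA (fun g ↦ by simp) ?_⟩
  ext k
  obtain rfl | hk := eq_or_ne k (Fin.last n)
  · simp
  · simp [hD.row_last_apply_eq_zero hD hA (Fin.val_lt_last hk), hk.symm]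

theorem integral_conj_herm_mul_herm (hD : IsWigner n D) (hD' : IsWigner n' D') (μ : Measure SU2)
    [IsFiniteMeasure μ] (v w : Fin (n + 1) → ℂ) (v' w' : Fin (n' + 1) → ℂ) :
    ∫ g, conj (herm (DVec D g v) w) * herm (DVec D' g v') w' ∂μ
      = star w ⬝ᵥ twirl μ hD.rep hD'.rep (Matrix.vecMulVec v (star v')) *ᵥ w' :=
  integral_conj_coeff_mul_coeff hD.continuous_rep hD'.continuous_rep v w v' w'

end IsWigner

/-- Schur orthogonality in vector form:
`∫ conj ⟨D^ℓ(g)v, w⟩ ⟨D^{ℓ'}(g)v', w'⟩ dμ = δ_{ℓℓ'} conj ⟨v,v'⟩ ⟨w,w'⟩/(2ℓ+1)`.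
The case `ℓ = ℓ'` and the case `ℓ ≠ ℓ'` are stated separately. -/
theorem wigner_schur_vector_form (μ : Measure SU2) [μ.IsHaarMeasure]
    [IsProbabilityMeasure μ] :
    (∀ (n : ℕ) (D D' : Fin (n + 1) → Fin (n + 1) → SU2 → ℂ),
      IsWigner n D → IsWigner n D' →
      ∀ v w v' w' : Fin (n + 1) → ℂ,
        ∫ g, conj (herm (DVec D g v) w) * herm (DVec D' g v') w' ∂μ
          = conj (herm v v') * herm w w' * ((n : ℂ) + 1)⁻¹) ∧
    (∀ n n' : ℕ, n ≠ n' →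
      ∀ (D : Fin (n + 1) → Fin (n + 1) → SU2 → ℂ)
        (D' : Fin (n' + 1) → Fin (n' + 1) → SU2 → ℂ),
      IsWigner n D → IsWigner n' D' →
      ∀ (v w : Fin (n + 1) → ℂ) (v' w' : Fin (n' + 1) → ℂ),
        ∫ g, conj (herm (DVec D g v) w) * herm (DVec D' g v') w' ∂μ = 0) := by
  refine ⟨fun n D D' hD hD' v w v' w' ↦ ?_, fun n n' hn D D' hD hD' v w v' w' ↦ ?_⟩
  · obtain rfl := hD.unique hD'
    have hvv' : v ⬝ᵥ star v' = conj (herm v v') := by simp [herm, dotProduct]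
    have hww' : star w ⬝ᵥ w' = herm w w' := rfl
    calc ∫ g, conj (herm (DVec D g v) w) * herm (DVec D g v') w' ∂μ
        = star w ⬝ᵥ twirl μ hD.rep hD.rep (Matrix.vecMulVec v (star v')) *ᵥ w' :=
          hD.integral_conj_herm_mul_herm hD μ v w v' w'
      _ = star w ⬝ᵥ ((v ⬝ᵥ star v' / ((n : ℂ) + 1)) • (1 : Matrix _ _ ℂ)) *ᵥ w' := by
          rw [twirl_eq_smul_one hD.continuous_rep fun _ ↦ hD.exists_eq_smul_one,
            Matrix.trace_vecMulVec, Fintype.card_fin, Nat.cast_succ]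
      _ = conj (herm v v') * herm w w' * ((n : ℂ) + 1)⁻¹ := by
          rw [Matrix.smul_mulVec, Matrix.one_mulVec, dotProduct_smul, smul_eq_mul, hvv', hww',
            div_mul_eq_mul_div, div_eq_mul_inv]
  · rw [hD.integral_conj_herm_mul_herm hD',
      hD.eq_zero_of_ne hD' hn (intertwines_twirl hD.continuous_rep hD'.continuous_rep _),
      Matrix.zero_mulVec, dotProduct_zero]
end
end

section
/- Irreducibility of the Wigner representation in orbit form: for every ℓ with 2ℓ ∈ ℕ and every nonzero v ∈ ℂ^{2ℓ+1}, the complex linear span of the orbit O^ℓ(v) = {D^ℓ(g) v : g ∈ SU(2)} is all of ℂ^{2ℓ+1}. -/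
open scoped ComplexConjugate Matrix
open MeasureTheory Complex

noncomputable section

/-!
The two-sided action of the diagonal torus of `SU(2)` sends `(α, β)` to `(p α, q β)` with
`|p| = |q| = 1`, and `D j k` is an eigenfunction of it with character `p ^ (n - j - k) q ^ (j - k)`.
These characters are pairwise distinct. No `D j k` vanishes identically: on the rotation by `θ`
it is, up to a nonzero factor, a polynomial in `t = tan θ`, which does not vanish at `t = i` because
both linear forms are then proportional to `z₀ + i z₁`. Dedekind's independence of characters
therefore makes all the matrix coefficients linearly independent. A nonzero functional `c`
annihilating the orbit of `v ≠ 0` would be a nontrivial linear relation `∑ c j * v k * D j k = 0`.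
-/

open Polynomial

theorem linearIndependent_of_injective_characters {G X ι K : Type*} [MulOneClass G] [CommRing K]
    [IsDomain K] {F : ι → X → K} {χ : ι → G →* K} (hχ : Function.Injective χ)
    (hF : ∀ t x, ∃ y, ∀ i, F i y = χ i t * F i x) (hF₀ : ∀ i, ∃ x, F i x ≠ 0) :
    LinearIndependent K F := by
  refine linearIndependent_iff'.mpr fun s c hc i hi => ?_
  obtain ⟨x, hx⟩ := hF₀ i
  have relation : ∑ k ∈ s, (c k * F k x) • ⇑(χ k) = 0 := by
    funext t
    obtain ⟨y, hy⟩ := hF t x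
    have hcy : ∑ k ∈ s, c k * F k y = 0 := by
      simpa only [Finset.sum_apply, Pi.smul_apply, smul_eq_mul, Pi.zero_apply] using congrFun hc y
    simp only [Finset.sum_apply, Pi.smul_apply, smul_eq_mul, Pi.zero_apply, ← hcy, hy]
    exact Finset.sum_congr rfl fun k _ => by ring
  have dedekind := (linearIndependent_monoidHom G K).comp χ hχ
  have : c i * F i x = 0 := linearIndependent_iff'.mp dedekind s _ relation i hi
  exact (mul_eq_zero.mp this).resolve_right hx

theorem span_range_mulVec_eq_top {X m ι K : Type*} [Finite m] [Fintype ι] [Field K]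
    {M : X → Matrix m ι K} (hM : LinearIndependent K fun (i : m × ι) x => M x i.1 i.2)
    {v : ι → K} (hv : v ≠ 0) : Submodule.span K (Set.range fun x => M x *ᵥ v) = ⊤ := by
  classical
  have := Fintype.ofFinite m
  by_contra hspan
  obtain ⟨f, hf, hker⟩ := Submodule.exists_le_ker_of_lt_top _ (lt_top_iff_ne_top.mpr hspan)
  obtain ⟨c, rfl⟩ := (dotProductEquiv K m).surjective f
  have hc : c ≠ 0 := by rintro rfl; exact hf (map_zero _)
  have annihilates (x : X) : c ⬝ᵥ M x *ᵥ v = 0 := hker (Submodule.subset_span ⟨x, rfl⟩)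
  have relation : ∑ i : m × ι, (c i.1 * v i.2) • (fun x => M x i.1 i.2) = 0 := by
    funext x
    rw [Pi.zero_apply, ← annihilates x]
    simp only [Finset.sum_apply, Pi.smul_apply, smul_eq_mul, dotProduct, Matrix.mulVec,
      Finset.mul_sum, Fintype.sum_prod_type]
    exact Finset.sum_congr rfl fun j _ => Finset.sum_congr rfl fun k _ => by ring
  obtain ⟨j, hj⟩ := Function.ne_iff.mp hc
  obtain ⟨k, hk⟩ := Function.ne_iff.mp hv
  exact mul_ne_zero hj hk (Fintype.linearIndependent_iff.mp hM _ relation (j, k))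

/-- The character `(p, q) ↦ p ^ a * q ^ b` of the two-dimensional torus, with complex values. -/
def torusCharacter (a b : ℤ) : Circle × Circle →* ℂ :=
  Circle.coeHom.comp ((zpowGroupHom a).coprod (zpowGroupHom b))

theorem torusCharacter_apply (a b : ℤ) (p q : Circle) :
    torusCharacter a b (p, q) = (p : ℂ) ^ a * (q : ℂ) ^ b := rfl

theorem circle_zpow_injective : Function.Injective fun (a : ℤ) (p : Circle) => p ^ a := by
  intro a b hab
  by_contra hne
  have hne' : ((a - b : ℤ) : ℝ) ≠ 0 := Int.cast_ne_zero.mpr (sub_ne_zero.mpr hne)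
  refine Circle.exp_pi_ne_one ?_
  calc Circle.exp Real.pi
      = Circle.exp (Real.pi / (a - b : ℤ)) ^ (a - b) := by
        rw [← Circle.exp_intCast_mul, mul_div_cancel₀ _ hne']
    _ = 1 := by rw [zpow_sub, mul_inv_eq_one]; exact congrFun hab _

theorem torusCharacter_injective : Function.Injective2 torusCharacter := by
  intro a a' b b' hχ
  constructor <;> refine circle_zpow_injective (funext fun p => Circle.ext ?_)
  · simpa [torusCharacter_apply] using DFunLike.congr_fun hχ (p, 1)
  · simpa [torusCharacter_apply] using DFunLike.congr_fun hχ (1, p)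

namespace SU2

theorem normSq_ga_add_normSq_gb (g : SU2) : normSq (ga g) + normSq (gb g) = 1 := by
  have column := congrFun (congrFun (Matrix.mem_unitaryGroup_iff'.mp g.1.2) 0) 0
  rw [Matrix.mul_apply, Fin.sum_univ_two] at column
  apply Complex.ofReal_injective
  simpa [ga, gb, normSq_eq_conj_mul_self] using column

theorem exists_ga_eq_gb_eq {a b : ℂ} (hab : normSq a + normSq b = 1) :
    ∃ g : SU2, ga g = a ∧ gb g = b := by
  have det_eq_one : (h a b).det = 1 := by
    rw [h, Matrix.det_fin_two_of, neg_mul, sub_neg_eq_add, mul_conj, mul_comm (conj b), mul_conj]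
    exact_mod_cast hab
  have star_eq_adjugate : star (h a b) = (h a b).adjugate := by
    rw [h, Matrix.adjugate_fin_two_of, neg_neg]
    ext i j
    fin_cases i <;> fin_cases j <;> simp
  have unitary : h a b ∈ Matrix.unitaryGroup (Fin 2) ℂ := by
    rw [Matrix.mem_unitaryGroup_iff', star_eq_adjugate, Matrix.adjugate_mul, det_eq_one, one_smul]
  exact ⟨⟨⟨h a b, unitary⟩, det_eq_one⟩, rfl, rfl⟩

theorem exists_torus_translate (g : SU2) (p q : Circle) :
    ∃ g' : SU2, ga g' = p * ga g ∧ gb g' = q * gb g :=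
  exists_ga_eq_gb_eq (by simp [normSq_ga_add_normSq_gb])

end SU2

/-- The polynomial `(a' X + b') ^ k (a - b X) ^ (n - k)`. At `a' = conj a` and `b' = conj b` it is
the generating polynomial of column `k` of the Wigner matrix of `h(a, b)`, dehomogenized by
`z₁ = 1`; the conjugates are separate variables so that it can be evaluated off `SU(2)`. -/
def wignerPoly {R : Type*} [CommRing R] (n k : ℕ) (a b a' b' : R) : R[X] :=
  (C a' * X + C b') ^ k * (C a - C b * X) ^ (n - k)

section WignerPoly

variable {R S K : Type*} [CommRing R] [CommRing S] [Field K] {n k : ℕ}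

theorem map_wignerPoly (f : R →+* S) (a b a' b' : R) :
    (wignerPoly n k a b a' b').map f = wignerPoly n k (f a) (f b) (f a') (f b') := by
  simp [wignerPoly]

theorem wignerPoly_const_mul (hk : k ≤ n) (r a b a' b' : R) :
    wignerPoly n k (r * a) (r * b) (r * a') (r * b') = C (r ^ n) * wignerPoly n k a b a' b' := by
  have left_factor : C (r * a') * X + C (r * b') = C r * (C a' * X + C b') := by
    simp only [C_mul]; ring
  have right_factor : C (r * a) - C (r * b) * X = C r * (C a - C b * X) := by
    simp only [C_mul]; ring
  rw [wignerPoly, wignerPoly, left_factor, right_factor, mul_pow, mul_pow,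
    mul_mul_mul_comm, ← pow_add, Nat.add_sub_cancel' hk, C_pow]

theorem wignerPoly_torus {p q : K} (hp : p ≠ 0) (hq : q ≠ 0) (a b a' b' : K) :
    wignerPoly n k (p * a) (q * b) (p⁻¹ * a') (q⁻¹ * b') =
      C (q⁻¹ ^ k * p ^ (n - k)) * (wignerPoly n k a b a' b').comp (C (q * p⁻¹) * X) := by
  have left_factor : C (p⁻¹ * a') * X + C (q⁻¹ * b') =
      C q⁻¹ * (C a' * X + C b').comp (C (q * p⁻¹) * X) := by
    have : p⁻¹ * a' = q⁻¹ * (a' * (q * p⁻¹)) := by field_simp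
    simp only [this, add_comp, mul_comp, C_comp, X_comp, C_mul]
    ring
  have right_factor : C (p * a) - C (q * b) * X =
      C p * (C a - C b * X).comp (C (q * p⁻¹) * X) := by
    have : q * b = p * (b * (q * p⁻¹)) := by field_simp
    simp only [this, sub_comp, mul_comp, C_comp, X_comp, C_mul]
    ring
  rw [wignerPoly, wignerPoly, left_factor, right_factor, mul_comp, pow_comp, pow_comp,
    mul_pow, mul_pow, mul_mul_mul_comm, ← C_pow, ← C_pow, ← C_mul]

theorem coeff_wignerPoly_torus {p q : K} (hp : p ≠ 0) (hq : q ≠ 0) (hk : k ≤ n) (j : ℕ)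
    (a b a' b' : K) :
    (wignerPoly n k (p * a) (q * b) (p⁻¹ * a') (q⁻¹ * b')).coeff j =
      p ^ (n - j - k : ℤ) * q ^ (j - k : ℤ) * (wignerPoly n k a b a' b').coeff j := by
  rw [wignerPoly_torus hp hq, coeff_C_mul, comp_C_mul_X_coeff, pow_sub₀ p hp hk]
  simp only [zpow_sub₀ hp, zpow_sub₀ hq, zpow_natCast, mul_pow, inv_pow]
  field_simp

theorem coeff_wignerPoly_I_ne_zero (hk : k ≤ n) {j : ℕ} (hj : j ≤ n) :
    (wignerPoly n k 1 I 1 I).coeff j ≠ 0 := by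
  have collapse : wignerPoly n k 1 I 1 I = C ((-I) ^ (n - k)) * (X + C I) ^ n := by
    have hI : (C I * C I : ℂ[X]) = -1 := by rw [← C_mul, I_mul_I, C_neg, C_1]
    have : (C 1 - C I * X : ℂ[X]) = C (-I) * (X + C I) := by
      rw [C_neg, C_1]
      linear_combination hI
    rw [wignerPoly, this, C_1, one_mul, mul_pow, mul_left_comm, ← pow_add,
      Nat.add_sub_cancel' hk, C_pow]
  rw [collapse, coeff_C_mul, coeff_X_add_C_pow]
  simp [(Nat.choose_pos hj).ne']

theorem exists_real_coeff_wignerPoly_ne_zero (hk : k ≤ n) {j : ℕ} (hj : j ≤ n) :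
    ∃ t : ℝ, (wignerPoly n k 1 (t : ℂ) 1 (t : ℂ)).coeff j ≠ 0 := by
  by_contra! hzero
  have coeff_eval (s : ℂ) : ((wignerPoly n k 1 X 1 X : ℂ[X][X]).coeff j).eval s =
      (wignerPoly n k 1 s 1 s).coeff j := by
    rw [← coe_evalRingHom, ← coeff_map, map_wignerPoly]
    simp
  have coeff_eq_zero : (wignerPoly n k 1 X 1 X : ℂ[X][X]).coeff j = 0 := by
    refine eq_zero_of_infinite_isRoot _ <|
      (Set.infinite_range_of_injective ofReal_injective).mono ?_
    rintro _ ⟨t, rfl⟩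
    exact (coeff_eval t).trans (hzero t)
  refine coeff_wignerPoly_I_ne_zero hk hj ?_
  rw [← coeff_eval, coeff_eq_zero, eval_zero]

end WignerPoly

theorem ofReal_sqrt_choose_ne_zero {n k : ℕ} (hk : k ≤ n) :
    (Real.sqrt (n.choose k) : ℂ) ≠ 0 := by
  have : (0 : ℝ) < n.choose k := mod_cast Nat.choose_pos hk
  exact ofReal_ne_zero.mpr (Real.sqrt_pos.mpr this).ne'

namespace IsWigner

variable {n : ℕ} {D : Fin (n + 1) → Fin (n + 1) → SU2 → ℂ}

theorem sum_C_mul_X_pow (hD : IsWigner n D) (k : Fin (n + 1)) (g : SU2) :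
    ∑ j : Fin (n + 1), C ((Real.sqrt (n.choose j) : ℂ) * D j k g) * X ^ (j : ℕ) =
      C (Real.sqrt (n.choose k) : ℂ) *
        wignerPoly n k (ga g) (gb g) (conj (ga g)) (conj (gb g)) := by
  refine Polynomial.funext fun z => ?_
  convert hD g k z 1 using 1
  · simp only [eval_finsetSum, eval_mul, eval_C, eval_pow, eval_X, one_pow]
    exact Finset.sum_congr rfl fun j _ => by ring
  · simp only [wignerPoly, eval_mul, eval_C, eval_pow, eval_X, eval_add, eval_sub]
    ring

theorem apply_eq_coeff_wignerPoly (hD : IsWigner n D) (j k : Fin (n + 1)) (g : SU2) :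
    D j k g = (Real.sqrt (n.choose k) : ℂ) / Real.sqrt (n.choose j) *
      (wignerPoly n k (ga g) (gb g) (conj (ga g)) (conj (gb g))).coeff j := by
  have coeff_eq := congrArg (coeff · (j : ℕ)) (hD.sum_C_mul_X_pow k g)
  simp only [finsetSum_coeff, coeff_C_mul, coeff_X_pow, Fin.val_inj, mul_ite, mul_one, mul_zero,
    Finset.sum_ite_eq, Finset.mem_univ, if_true] at coeff_eq
  rw [div_mul_eq_mul_div, eq_div_iff (ofReal_sqrt_choose_ne_zero j.is_le), ← coeff_eq, mul_comm]

theorem apply_torus (hD : IsWigner n D) (j k : Fin (n + 1)) {p q : Circle} {g g' : SU2}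
    (ha : ga g' = p * ga g) (hb : gb g' = q * gb g) :
    D j k g' = torusCharacter (n - j - k) (j - k) (p, q) * D j k g := by
  simp only [hD.apply_eq_coeff_wignerPoly, ha, hb, map_mul, ← Circle.coe_inv_eq_conj,
    Circle.coe_inv, torusCharacter_apply]
  rw [coeff_wignerPoly_torus p.coe_ne_zero q.coe_ne_zero k.is_le]
  ring

theorem exists_apply_ne_zero (hD : IsWigner n D) (j k : Fin (n + 1)) : ∃ g, D j k g ≠ 0 := by
  obtain ⟨t, ht⟩ := exists_real_coeff_wignerPoly_ne_zero k.is_le j.is_le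
  set r : ℝ := Real.cos (Real.arctan t)
  have hr : (r : ℂ) ≠ 0 := ofReal_ne_zero.mpr (Real.cos_arctan_pos t).ne'
  have unit : normSq (r * 1) + normSq (r * t) = 1 := by
    have hsin : r * t = Real.sin (Real.arctan t) := by
      rw [mul_comm, ← Real.tan_mul_cos (Real.cos_arctan_pos t).ne', Real.tan_arctan]
    rw [mul_one, ← ofReal_mul, hsin, normSq_ofReal, normSq_ofReal, ← sq, ← sq,
      Real.cos_sq_add_sin_sq]
  obtain ⟨g, ha, hb⟩ := SU2.exists_ga_eq_gb_eq unit
  refine ⟨g, ?_⟩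
  rw [hD.apply_eq_coeff_wignerPoly, ha, hb]
  simp only [map_mul, map_one, conj_ofReal]
  rw [wignerPoly_const_mul k.is_le, coeff_C_mul]
  have hj := ofReal_sqrt_choose_ne_zero j.is_le
  have hk := ofReal_sqrt_choose_ne_zero k.is_le
  exact mul_ne_zero (div_ne_zero hk hj) (mul_ne_zero (pow_ne_zero n hr) ht)

theorem linearIndependent (hD : IsWigner n D) :
    LinearIndependent ℂ fun i : Fin (n + 1) × Fin (n + 1) => D i.1 i.2 := by
  refine linearIndependent_of_injective_characters
    (χ := fun i => torusCharacter (n - (i.1 : ℕ) - (i.2 : ℕ)) ((i.1 : ℕ) - (i.2 : ℕ))) ?_ ?_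
    fun i => hD.exists_apply_ne_zero i.1 i.2
  · intro i i' hχ
    obtain ⟨hsum, hdiff⟩ := torusCharacter_injective hχ
    ext <;> lia
  · rintro ⟨p, q⟩ g
    obtain ⟨g', ha, hb⟩ := SU2.exists_torus_translate g p q
    exact ⟨g', fun i => hD.apply_torus i.1 i.2 ha hb⟩

end IsWigner

/-- irreducibility in orbit form: for every nonzero `v ∈ ℂ^{2ℓ+1}` the span of
the orbit `{D^ℓ(g) v : g ∈ SU(2)}` is all of `ℂ^{2ℓ+1}`. -/
theorem wigner_orbit_spans (n : ℕ) (D : Fin (n + 1) → Fin (n + 1) → SU2 → ℂ)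
    (hD : IsWigner n D) (v : Fin (n + 1) → ℂ) (hv : v ≠ 0) :
    Submodule.span ℂ {w : Fin (n + 1) → ℂ | ∃ g : SU2, w = DVec D g v} = ⊤ := by
  have orbit_eq_range : {w | ∃ g : SU2, w = DVec D g v} =
      Set.range fun g => (Matrix.of fun j k => D j k g) *ᵥ v := by
    ext w
    exact exists_congr fun g => eq_comm
  rw [orbit_eq_range]
  exact span_range_mulVec_eq_top hD.linearIndependent hv
end
end

section
/- For every ℓ with 2ℓ ∈ ℕ and every pair of nonzero vectors v, w ∈ ℂ^{2ℓ+1}, the set {g ∈ SU(2) : ⟨D^ℓ(g) v, w⟩ = 0} has Haar measure zero in SU(2). -/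
open scoped ComplexConjugate Matrix
open MeasureTheory Complex

noncomputable section

/-!
For a representation `ρ` of a group `G` with a finite left-invariant measure, take a subspace `W`
minimal among those for which `{g | ρ g v ∈ W}` has positive measure. If `ρ x` moves `W` to a different
subspace, then `W ∩ (ρ x)⁻¹ W` is smaller than `W`, so the sets `{g | ρ g v ∈ W}` and
`{g | ρ (x g) v ∈ W}` overlap in a null set; finiteness of the measure leaves room for only finitely
many such translates, so the stabilizer of `W` has finite index in `G`. If `G` has no proper
subgroup of finite index and `ρ` is irreducible, then `W` is zero, which is impossible for `v ≠ 0`,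
or the whole space.

`SU(2)` has no proper subgroup of finite index because it is generated by circle subgroups (Euler
angles), which are divisible. The Wigner representation is irreducible because a diagonal element
with distinct eigenvalues isolates a basis vector in any nonzero invariant subspace, and an element
with `α, β ≠ 0` carries it first to the extreme basis vector and from there to all the others.
-/

section InvariantSubspaces

variable {G k V : Type*} [Group G] [Field k] [AddCommGroup V] [Module k V]
  {ρ : Representation k G V} {W : Submodule k V}

/-- The subgroup of those `g` for which `ρ g` maps the subspace `W` onto itself. -/
def submoduleStabilizer (ρ : Representation k G V) (W : Submodule k V) : Subgroup G where
  carrier := {g | W.map (ρ g) = W}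
  one_mem' := by
    change W.map (ρ 1) = W
    rw [map_one]
    exact W.map_id
  mul_mem' {x y} (hx : W.map (ρ x) = W) (hy : W.map (ρ y) = W) := by
    change W.map (ρ (x * y)) = W
    rw [map_mul, Module.End.mul_eq_comp, Submodule.map_comp, hy, hx]
  inv_mem' {x} (hx : W.map (ρ x) = W) := by
    change W.map (ρ x⁻¹) = W
    nth_rw 1 [← hx]
    rw [← Submodule.map_comp, ← Module.End.mul_eq_comp, ← map_mul, inv_mul_cancel, map_one]
    exact W.map_id

lemma mem_submoduleStabilizer {g : G} : g ∈ submoduleStabilizer ρ W ↔ W.map (ρ g) = W :=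
  Iff.rfl

lemma mem_submoduleStabilizer_of_le_comap [FiniteDimensional k V] {g : G}
    (hW : W ≤ W.comap (ρ g)) : g ∈ submoduleStabilizer ρ W :=
  mem_submoduleStabilizer.mpr <| Submodule.eq_of_le_of_finrank_eq
    (Submodule.map_le_iff_le_comap.mpr hW)
    (W.equivMapOfInjective (ρ g) (ρ.apply_bijective g).injective).finrank_eq.symm

lemma eq_bot_or_eq_top_of_submoduleStabilizer_eq_top [ρ.IsIrreducible]
    (hW : submoduleStabilizer ρ W = ⊤) : W = ⊥ ∨ W = ⊤ := by
  have map_eq (g : G) : W.map (ρ g) = W := mem_submoduleStabilizer.mp (hW ▸ Subgroup.mem_top g)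
  let σ : Subrepresentation ρ :=
    ⟨W, fun g _ hu => Submodule.map_le_iff_le_comap.mp (map_eq g).le hu⟩
  exact (eq_bot_or_eq_top σ).imp (congrArg Subrepresentation.toSubmodule)
    (congrArg Subrepresentation.toSubmodule)

end InvariantSubspaces

section NullOrbits

variable {G : Type*} [Group G] [MeasurableSpace G] [MeasurableMul G]
  {μ : Measure G} [IsFiniteMeasure μ] [μ.IsMulLeftInvariant]

lemma finiteIndex_of_aedisjoint_preimage_mul {Z : Set G} (hZ : MeasurableSet Z)
    (hμZ : μ Z ≠ 0) {H : Subgroup G} (hdisj : ∀ x ∉ H, AEDisjoint μ Z ((x * ·) ⁻¹' Z)) :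
    H.FiniteIndex := by
  let translate (q : G ⧸ H) : Set G := (q.out⁻¹ * ·) ⁻¹' Z
  have measure_translate (q : G ⧸ H) : μ (translate q) = μ Z := measure_preimage_mul μ _ Z
  have disjoint_translates : Pairwise (Function.onFun (AEDisjoint μ) translate) := by
    intro q r hqr
    have hout : r.out⁻¹ * q.out ∉ H := by
      rwa [← QuotientGroup.eq, QuotientGroup.out_eq', QuotientGroup.out_eq', eq_comm]
    have hinter : translate q ∩ translate r =
        (q.out⁻¹ * ·) ⁻¹' (Z ∩ (r.out⁻¹ * q.out * ·) ⁻¹' Z) := by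
      ext g
      simp [translate, mul_assoc]
    rw [Function.onFun, AEDisjoint, hinter, measure_preimage_mul]
    exact hdisj _ hout
  have finite_cosets : {q | μ Z ≤ μ (translate q)}.Finite :=
    Measure.finite_const_le_meas_of_disjoint_iUnion₀ μ (pos_iff_ne_zero.mpr hμZ)
      (fun _ => (measurable_const_mul _ hZ).nullMeasurableSet) disjoint_translates
      (measure_ne_top μ _)
  have : Finite (G ⧸ H) :=
    Set.finite_univ_iff.mp (finite_cosets.subset fun q _ => (measure_translate q).ge)
  exact H.finiteIndex_of_finite_quotient

variable {k V : Type*} [Field k] [AddCommGroup V] [Module k V] [FiniteDimensional k V]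
  {ρ : Representation k G V} {v : V} {W : Submodule k V}

lemma finiteIndex_submoduleStabilizer_of_minimal (hmeas : MeasurableSet {g | ρ g v ∈ W})
    (hW : Minimal (fun U : Submodule k V => μ {g | ρ g v ∈ U} ≠ 0) W) :
    (submoduleStabilizer ρ W).FiniteIndex := by
  refine finiteIndex_of_aedisjoint_preimage_mul hmeas hW.prop fun x hx => ?_
  by_contra hoverlap
  have hinter : {g | ρ g v ∈ W} ∩ (x * ·) ⁻¹' {g | ρ g v ∈ W} =
      {g | ρ g v ∈ W ⊓ W.comap (ρ x)} := by
    ext g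
    simp
  rw [AEDisjoint, hinter] at hoverlap
  exact hx (mem_submoduleStabilizer_of_le_comap
    ((hW.le_of_le hoverlap inf_le_left).trans inf_le_right))

theorem measure_setOf_apply_mem_eq_zero [ρ.IsIrreducible]
    (hG : ∀ H : Subgroup G, H.FiniteIndex → H = ⊤) (hv : v ≠ 0)
    (hmeas : ∀ U : Submodule k V, MeasurableSet {g | ρ g v ∈ U}) (hW : W ≠ ⊤) :
    μ {g | ρ g v ∈ W} = 0 := by
  by_contra hμW
  obtain ⟨U, hUW, hU⟩ := exists_minimal_le_of_wellFoundedLT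
    (fun U : Submodule k V => μ {g | ρ g v ∈ U} ≠ 0) W hμW
  have hstab := hG _ (finiteIndex_submoduleStabilizer_of_minimal (hmeas U) hU)
  rcases eq_bot_or_eq_top_of_submoduleStabilizer_eq_top hstab with rfl | rfl
  · have apply_ne_zero (g : G) : ρ g v ≠ 0 :=
      (map_ne_zero_iff _ (ρ.apply_bijective g).injective).mpr hv
    exact hU.prop (by simp [apply_ne_zero])
  · exact hW (top_le_iff.mp hUW)

end NullOrbits

section Divisibility

lemma mem_of_finiteIndex_of_forall_exists_pow_eq {G : Type*} [Group G] (H : Subgroup G)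
    [H.FiniteIndex] {x : G} (hx : ∀ m : ℕ, m ≠ 0 → ∃ y, y ^ m = x) : x ∈ H := by
  obtain ⟨y, rfl⟩ := hx _ H.index.factorial_ne_zero
  exact H.pow_mem_of_index_ne_zero_of_dvd Subgroup.FiniteIndex.index_ne_zero y
    fun _ => Nat.dvd_factorial

lemma exists_circle_pow_eq (z : Circle) {m : ℕ} (hm : m ≠ 0) : ∃ w : Circle, w ^ m = z := by
  refine ⟨Circle.exp (arg z / m), ?_⟩
  rw [← Circle.exp_natCast_mul, mul_div_cancel₀ _ (Nat.cast_ne_zero.mpr hm), Circle.exp_arg]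

lemma map_circle_mem_of_finiteIndex {G : Type*} [Group G] (H : Subgroup G) [H.FiniteIndex]
    (f : Circle →* G) (z : Circle) : f z ∈ H := by
  refine mem_of_finiteIndex_of_forall_exists_pow_eq H fun m hm => ?_
  obtain ⟨w, rfl⟩ := exists_circle_pow_eq z hm
  exact ⟨f w, (map_pow f w m).symm⟩

lemma exists_norm_mul_circle_eq (z : ℂ) : ∃ u : Circle, ‖z‖ * (u : ℂ) = z :=
  ⟨Circle.exp (arg z), norm_mul_exp_arg_mul_I z⟩

end Divisibility

namespace SU2

lemma conj_ga_mul_ga_add_conj_gb_mul_gb (g : SU2) :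
    conj (ga g) * ga g + conj (gb g) * gb g = 1 := by
  have hunit : star g.1.1 * g.1.1 = 1 := Matrix.mem_unitaryGroup_iff'.mp g.1.2
  simpa [ga, gb, Matrix.mul_apply, Fin.sum_univ_two] using congrFun₂ hunit 0 0

lemma norm_ga_sq_add_norm_gb_sq (g : SU2) : ‖ga g‖ ^ 2 + ‖gb g‖ ^ 2 = 1 := by
  have hunit := conj_ga_mul_ga_add_conj_gb_mul_gb g
  rw [conj_mul', conj_mul'] at hunit
  exact_mod_cast hunit

lemma star_coe_eq_adjugate (g : SU2) : star g.1.1 = g.1.1.adjugate := by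
  have hdet : g.1.1.det = 1 := g.2
  have hunit : star g.1.1 * g.1.1 = 1 := Matrix.mem_unitaryGroup_iff'.mp g.1.2
  calc star g.1.1 = star g.1.1 * (g.1.1 * g.1.1.adjugate) := by
        rw [Matrix.mul_adjugate, hdet, one_smul, mul_one]
    _ = g.1.1.adjugate := by rw [← mul_assoc, hunit, one_mul]

lemma coe_eq_h (g : SU2) : g.1.1 = h (ga g) (gb g) := by
  have h01 : conj (g.1.1 0 1) = -gb g := by
    simpa [gb, Matrix.adjugate_fin_two] using congrFun₂ (star_coe_eq_adjugate g) 1 0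
  have h11 : conj (ga g) = g.1.1 1 1 := by
    simpa [ga, Matrix.adjugate_fin_two] using congrFun₂ (star_coe_eq_adjugate g) 0 0
  ext i j
  fin_cases i <;> fin_cases j
  · rfl
  · simpa [h] using congrArg conj h01
  · rfl
  · exact h11.symm

lemma ext_ga_gb {x y : SU2} (hga : ga x = ga y) (hgb : gb x = gb y) : x = y :=
  Subtype.ext <| Subtype.ext <| by
    rw [coe_eq_h, coe_eq_h, hga, hgb]

@[simp] lemma ga_one : ga 1 = 1 := rfl

@[simp] lemma gb_one : gb 1 = 0 := rfl

lemma ga_mul (x y : SU2) : ga (x * y) = ga x * ga y - conj (gb x) * gb y := by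
  have : (x * y).1.1 0 0 = (x.1.1 * y.1.1) 0 0 := rfl
  rw [ga, this, coe_eq_h x, coe_eq_h y, Matrix.mul_apply, Fin.sum_univ_two]
  simp [h, sub_eq_add_neg]

lemma gb_mul (x y : SU2) : gb (x * y) = gb x * ga y + conj (ga x) * gb y := by
  have : (x * y).1.1 1 0 = (x.1.1 * y.1.1) 1 0 := rfl
  rw [gb, this, coe_eq_h x, coe_eq_h y, Matrix.mul_apply, Fin.sum_univ_two]
  simp [h]

lemma continuous_ga : Continuous ga :=
  (continuous_subtype_val.comp continuous_subtype_val).matrix_elem 0 0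

lemma continuous_gb : Continuous gb :=
  (continuous_subtype_val.comp continuous_subtype_val).matrix_elem 1 0

/-- The element `h(a, b)` of `SU(2)`. -/
def ofEntries (a b : ℂ) (hab : conj a * a + conj b * b = 1) : SU2 :=
  ⟨⟨h a b, by
    rw [Matrix.mem_unitaryGroup_iff']
    ext i j
    fin_cases i <;> fin_cases j
    · simpa [h, Matrix.mul_apply, Fin.sum_univ_two] using hab
    · simp [h, Matrix.mul_apply, Fin.sum_univ_two, mul_comm]
    · simp [h, Matrix.mul_apply, Fin.sum_univ_two, mul_comm]
    · simpa [h, Matrix.mul_apply, Fin.sum_univ_two, mul_comm, add_comm] using hab⟩, by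
    change (h a b).det = 1
    rw [h, Matrix.det_fin_two_of]
    linear_combination hab⟩

lemma ga_ofEntries {a b : ℂ} (hab : conj a * a + conj b * b = 1) : ga (ofEntries a b hab) = a :=
  rfl

lemma gb_ofEntries {a b : ℂ} (hab : conj a * a + conj b * b = 1) : gb (ofEntries a b hab) = b :=
  rfl

/-- The diagonal torus `z ↦ h(z, 0)` of `SU(2)`. -/
def torus : Circle →* SU2 where
  toFun z := ofEntries z 0 (by simp [← normSq_eq_conj_mul_self])
  map_one' := ext_ga_gb rfl rfl
  map_mul' z w := by
    apply ext_ga_gb <;> simp [ga_mul, gb_mul, ga_ofEntries, gb_ofEntries]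

@[simp] lemma ga_torus (z : Circle) : ga (torus z) = z := rfl

@[simp] lemma gb_torus (z : Circle) : gb (torus z) = 0 := rfl

/-- The real rotations in `SU(2)`, with `x + iy` on the unit circle corresponding to
`h(x, y) = !![x, -y; y, x]`. -/
def rotation : Circle →* SU2 where
  toFun z := ofEntries (z : ℂ).re (z : ℂ).im (by
    have := normSq_apply (z : ℂ)
    rw [Circle.normSq_coe] at this
    simp only [conj_ofReal]
    exact_mod_cast this.symm)
  map_one' := by apply ext_ga_gb <;> simp [ga_ofEntries, gb_ofEntries]
  map_mul' z w := by
    apply ext_ga_gb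
    · simp [ga_mul, ga_ofEntries, gb_ofEntries]
    · simp [gb_mul, ga_ofEntries, gb_ofEntries, add_comm]

@[simp] lemma ga_rotation (z : Circle) : ga (rotation z) = (z : ℂ).re := rfl

@[simp] lemma gb_rotation (z : Circle) : gb (rotation z) = (z : ℂ).im := rfl

lemma exists_ga_ne_zero_and_gb_ne_zero : ∃ g : SU2, ga g ≠ 0 ∧ gb g ≠ 0 := by
  refine ⟨rotation (Circle.exp 1), ?_, ?_⟩
  · rw [ga_rotation, Circle.coe_exp, exp_ofReal_mul_I_re]
    exact ofReal_ne_zero.mpr Real.cos_one_pos.ne'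
  · rw [gb_rotation, Circle.coe_exp, exp_ofReal_mul_I_im]
    exact ofReal_ne_zero.mpr (Real.sin_pos_of_pos_of_le_one one_pos le_rfl).ne'

lemma exists_eq_torus_mul_rotation_mul_torus (g : SU2) :
    ∃ p c q : Circle, g = torus p * (rotation c * torus q) := by
  obtain ⟨u, hu⟩ := exists_norm_mul_circle_eq (ga g)
  obtain ⟨w, hw⟩ := exists_norm_mul_circle_eq (gb g)
  obtain ⟨q, hq⟩ := exists_circle_pow_eq (u * w) two_ne_zero
  have exists_phase : ∃ p : Circle, p * q = u ∧ p⁻¹ * q = w := by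
    refine ⟨u * q⁻¹, inv_mul_cancel_right u q, ?_⟩
    rw [mul_inv_rev, inv_inv, mul_right_comm, ← sq, hq, mul_comm u, mul_inv_cancel_right]
  obtain ⟨p, rfl, rfl⟩ := exists_phase
  let c : Circle := ⟨‖ga g‖ + ‖gb g‖ * I, by
    rw [← SetLike.mem_coe, Submonoid.coe_unitSphere, mem_sphere_zero_iff_norm, norm_add_mul_I,
      norm_ga_sq_add_norm_gb_sq, Real.sqrt_one]⟩
  have hc : (c : ℂ) = ‖ga g‖ + ‖gb g‖ * I := rfl
  refine ⟨p, c, q, ext_ga_gb ?_ ?_⟩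
  · rw [← hu]
    simp [ga_mul, hc, mul_left_comm]
  · rw [← hw, Circle.coe_mul, Circle.coe_inv_eq_conj]
    simp [gb_mul, hc, mul_left_comm]

theorem eq_top_of_finiteIndex (H : Subgroup SU2) (hH : H.FiniteIndex) : H = ⊤ := by
  refine (Subgroup.eq_top_iff' H).mpr fun g => ?_
  obtain ⟨p, c, q, rfl⟩ := exists_eq_torus_mul_rotation_mul_torus g
  exact mul_mem (map_circle_mem_of_finiteIndex H torus p)
    (mul_mem (map_circle_mem_of_finiteIndex H rotation c) (map_circle_mem_of_finiteIndex H torus q))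

end SU2

section BinaryForms

variable {n : ℕ}

lemma sqrt_choose_ne_zero (j : Fin (n + 1)) : (Real.sqrt (n.choose j) : ℂ) ≠ 0 := by
  have hpos : (0 : ℝ) < n.choose j := Nat.cast_pos.mpr (Nat.choose_pos (Nat.lt_succ_iff.mp j.2))
  exact ofReal_ne_zero.mpr (Real.sqrt_pos.mpr hpos).ne'

/-- The binary form of degree `n` with coordinates `v` in the basis of normalized monomials
`√(binom n j) z₀^j z₁^(n-j)`, in which `IsWigner` expresses the action of `SU(2)`. -/
def binaryForm (n : ℕ) : (Fin (n + 1) → ℂ) →ₗ[ℂ] ℂ → ℂ → ℂ where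
  toFun v z₀ z₁ := ∑ j : Fin (n + 1),
    (Real.sqrt (n.choose j) : ℂ) * z₀ ^ (j : ℕ) * z₁ ^ (n - (j : ℕ)) * v j
  map_add' v w := by
    ext z₀ z₁
    simp [mul_add, Finset.sum_add_distrib]
  map_smul' c v := by
    ext z₀ z₁
    simp [Finset.mul_sum, mul_left_comm]

lemma binaryForm_apply (v : Fin (n + 1) → ℂ) (z₀ z₁ : ℂ) :
    binaryForm n v z₀ z₁ = ∑ j : Fin (n + 1),
      (Real.sqrt (n.choose j) : ℂ) * z₀ ^ (j : ℕ) * z₁ ^ (n - (j : ℕ)) * v j :=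
  rfl

lemma binaryForm_zero_one (v : Fin (n + 1) → ℂ) : binaryForm n v 0 1 = v 0 := by
  rw [binaryForm_apply, Finset.sum_eq_single_of_mem 0 (Finset.mem_univ 0)]
  · simp
  · intro j _ hj
    simp [hj]

lemma binaryForm_single (k : Fin (n + 1)) (z₀ z₁ : ℂ) :
    binaryForm n (Pi.single k 1) z₀ z₁ =
      (Real.sqrt (n.choose k) : ℂ) * z₀ ^ (k : ℕ) * z₁ ^ (n - (k : ℕ)) := by
  simp [binaryForm_apply, Pi.single_apply]

lemma binaryForm_injective : Function.Injective (binaryForm n) := by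
  refine (injective_iff_map_eq_zero _).mpr fun v hv => ?_
  have hcoeff : (fun j : Fin (n + 1) => (Real.sqrt (n.choose j) : ℂ) * v j) = 0 := by
    refine Matrix.eq_zero_of_forall_index_sum_pow_mul_eq_zero
      (f := fun i : Fin (n + 1) => ((i : ℕ) : ℂ)) (Nat.cast_injective.comp Fin.val_injective)
      fun i => ?_
    calc ∑ j : Fin (n + 1), ((i : ℕ) : ℂ) ^ (j : ℕ) * ((Real.sqrt (n.choose j) : ℂ) * v j)
        = binaryForm n v (i : ℕ) 1 := by
          simp only [binaryForm_apply, one_pow, mul_one]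
          exact Finset.sum_congr rfl fun j _ => by ring
      _ = 0 := by rw [hv]; rfl
  funext j
  exact (mul_eq_zero.mp (congrFun hcoeff j)).resolve_left (sqrt_choose_ne_zero j)

end BinaryForms

section Wigner

variable {n : ℕ} {D : Fin (n + 1) → Fin (n + 1) → SU2 → ℂ}

lemma binaryForm_DVec (hD : IsWigner n D) (g : SU2) (v : Fin (n + 1) → ℂ) (z₀ z₁ : ℂ) :
    binaryForm n (DVec D g v) z₀ z₁ =
      binaryForm n v (conj (ga g) * z₀ + conj (gb g) * z₁) (-(gb g) * z₀ + ga g * z₁) := by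
  simp_rw [binaryForm_apply, DVec, ← hD g, Finset.sum_mul, Finset.mul_sum]
  rw [Finset.sum_comm]
  simp_rw [mul_assoc]

lemma DVec_one (hD : IsWigner n D) (v : Fin (n + 1) → ℂ) : DVec D 1 v = v := by
  apply binaryForm_injective
  ext z₀ z₁
  simp [binaryForm_DVec hD]

lemma DVec_mul (hD : IsWigner n D) (x y : SU2) (v : Fin (n + 1) → ℂ) :
    DVec D (x * y) v = DVec D x (DVec D y v) := by
  apply binaryForm_injective
  ext z₀ z₁
  simp only [binaryForm_DVec hD, SU2.ga_mul, SU2.gb_mul, map_add, map_sub, map_mul, conj_conj]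
  exact congrArg₂ (binaryForm n v) (by ring) (by ring)

/-- The spin-`n/2` representation of `SU(2)` given by the Wigner matrices `D^ℓ(g)`. -/
def wignerRepresentation (hD : IsWigner n D) : Representation ℂ SU2 (Fin (n + 1) → ℂ) where
  toFun g := Matrix.mulVecLin (.of fun j k => D j k g)
  map_one' := LinearMap.ext (DVec_one hD)
  map_mul' x y := LinearMap.ext (DVec_mul hD x y)

lemma continuous_DVec (hD : IsWigner n D) (v : Fin (n + 1) → ℂ) :
    Continuous fun g => DVec D g v := by
  have hembed := LinearMap.isClosedEmbedding_of_injective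
    (LinearMap.ker_eq_bot.mpr (binaryForm_injective (n := n)))
  refine hembed.isInducing.continuous_iff.mpr
    (continuous_pi fun z₀ => continuous_pi fun z₁ => ?_)
  have hga := SU2.continuous_ga
  have hgb := SU2.continuous_gb
  simp only [Function.comp_apply, binaryForm_DVec hD, binaryForm_apply]
  fun_prop

lemma DVec_torus (hD : IsWigner n D) (z : Circle) (v : Fin (n + 1) → ℂ) :
    DVec D (SU2.torus z) v =
      (fun k : Fin (n + 1) => conj (z : ℂ) ^ (k : ℕ) * z ^ (n - (k : ℕ))) * v := by
  apply binaryForm_injective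
  ext z₀ z₁
  simp only [binaryForm_DVec hD, SU2.ga_torus, SU2.gb_torus, map_zero, neg_zero, zero_mul,
    add_zero, zero_add, binaryForm_apply, mul_pow, Pi.mul_apply]
  exact Finset.sum_congr rfl fun k _ => by ring

lemma DVec_single_apply_zero (hD : IsWigner n D) (g : SU2) (k : Fin (n + 1)) :
    DVec D g (Pi.single k 1) 0 =
      (Real.sqrt (n.choose k) : ℂ) * conj (gb g) ^ (k : ℕ) * ga g ^ (n - (k : ℕ)) := by
  rw [← binaryForm_zero_one (DVec D g _), binaryForm_DVec hD, binaryForm_single]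
  simp

lemma DVec_single_zero (hD : IsWigner n D) (g : SU2) :
    DVec D g (Pi.single 0 1) = fun j : Fin (n + 1) =>
      (Real.sqrt (n.choose j) : ℂ) * (-gb g) ^ (j : ℕ) * ga g ^ (n - (j : ℕ)) := by
  apply binaryForm_injective
  ext z₀ z₁
  rw [binaryForm_DVec hD, binaryForm_single, binaryForm_apply]
  have hsq (i : Fin (n + 1)) :
      (Real.sqrt (n.choose i) : ℂ) * (Real.sqrt (n.choose i) : ℂ) = n.choose i := by
    rw [← ofReal_mul, Real.mul_self_sqrt (Nat.cast_nonneg _), ofReal_natCast]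
  simp only [Fin.val_zero, Nat.choose_zero_right, Nat.cast_one, Real.sqrt_one, ofReal_one, pow_zero,
    mul_one, one_mul, Nat.sub_zero, add_pow, Finset.sum_range]
  exact Finset.sum_congr rfl fun i _ => by rw [← hsq]; ring

end Wigner

section Irreducibility

lemma single_mem_of_diagonal_mul_mem {K ι : Type*} [Field K] [Finite ι] [DecidableEq ι]
    {d : ι → K} (hd : Function.Injective d) {W : Submodule K (ι → K)}
    (hW : ∀ u ∈ W, d * u ∈ W) {u : ι → K} (hu : u ∈ W) {i : ι} (hi : u i ≠ 0) :
    Pi.single i 1 ∈ W := by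
  cases nonempty_fintype ι
  have hproj : Polynomial.aeval d (Lagrange.basis Finset.univ d i) • u = u i • Pi.single i 1 := by
    ext j
    rw [Pi.smul_apply', Polynomial.aeval_pi_apply₂, Polynomial.coe_aeval_eq_eval]
    rcases eq_or_ne i j with rfl | hij
    · simp [Lagrange.eval_basis_self hd.injOn (Finset.mem_univ i)]
    · simp [Lagrange.eval_basis_of_ne hij (Finset.mem_univ j), hij.symm]
  rw [← W.smul_mem_iff hi, ← hproj]
  exact Polynomial.aeval_apply_smul_mem_of_le_comap' hu _ d hW

lemma exists_circle_injective_weights (n : ℕ) : ∃ z : Circle, Function.Injective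
    fun k : Fin (n + 1) => conj (z : ℂ) ^ (k : ℕ) * (z : ℂ) ^ (n - (k : ℕ)) := by
  have hζ := isPrimitiveRoot_exp (2 * (n + 1)) (by positivity)
  set ζ := exp (2 * Real.pi * I / (2 * (n + 1) : ℕ))
  let z : Circle := ⟨ζ, mem_sphere_zero_iff_norm.mpr (hζ.norm'_eq_one (by positivity))⟩
  let weight (i : Fin (n + 1)) : ℂ := conj (z : ℂ) ^ (i : ℕ) * (z : ℂ) ^ (n - (i : ℕ))
  refine ⟨z, fun j k (hjk : weight j = weight k) => ?_⟩
  have hconj : conj (z : ℂ) * ζ = 1 := by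
    rw [← Circle.coe_inv_eq_conj, Circle.coe_inv]
    exact inv_mul_cancel₀ z.coe_ne_zero
  have weight_mul_pow (i : Fin (n + 1)) : weight i * ζ ^ (2 * (i : ℕ)) = ζ ^ n := by
    calc conj (z : ℂ) ^ (i : ℕ) * ζ ^ (n - (i : ℕ)) * ζ ^ (2 * (i : ℕ))
        = (conj (z : ℂ) * ζ) ^ (i : ℕ) * (ζ ^ (n - (i : ℕ)) * ζ ^ (i : ℕ)) := by ring
      _ = ζ ^ n := by rw [hconj, one_pow, one_mul, ← pow_add, Nat.sub_add_cancel i.is_le]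
  have weight_ne_zero : weight j ≠ 0 := by simp [weight]
  have hpow : ζ ^ (2 * (j : ℕ)) = ζ ^ (2 * (k : ℕ)) :=
    mul_left_cancel₀ weight_ne_zero <| by rw [weight_mul_pow, hjk, weight_mul_pow]
  have hexp := hζ.pow_inj (by lia) (by lia) hpow
  lia

variable {n : ℕ} {D : Fin (n + 1) → Fin (n + 1) → SU2 → ℂ}

lemma single_mem_of_DVec_torus_mem (hD : IsWigner n D) {W : Submodule ℂ (Fin (n + 1) → ℂ)}
    (hW : ∀ z, ∀ u ∈ W, DVec D (SU2.torus z) u ∈ W) {u : Fin (n + 1) → ℂ} (hu : u ∈ W)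
    {k : Fin (n + 1)} (hk : u k ≠ 0) : Pi.single k 1 ∈ W := by
  obtain ⟨z, hz⟩ := exists_circle_injective_weights n
  exact single_mem_of_diagonal_mul_mem hz (fun x hx => DVec_torus hD z x ▸ hW z x hx) hu hk

lemma eq_top_of_DVec_mem (hD : IsWigner n D) {W : Submodule ℂ (Fin (n + 1) → ℂ)}
    (hW : ∀ g, ∀ u ∈ W, DVec D g u ∈ W) (hne : W ≠ ⊥) : W = ⊤ := by
  obtain ⟨u, hu, hu0⟩ := W.exists_mem_ne_zero_of_ne_bot hne
  obtain ⟨k, hk⟩ := Function.ne_iff.mp hu0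
  obtain ⟨g, hga, hgb⟩ := SU2.exists_ga_ne_zero_and_gb_ne_zero
  have single_mem {x : Fin (n + 1) → ℂ} (hx : x ∈ W) {i : Fin (n + 1)} (hi : x i ≠ 0) :
      Pi.single i 1 ∈ W :=
    single_mem_of_DVec_torus_mem hD (fun z => hW (SU2.torus z)) hx hi
  have single_zero_mem : Pi.single 0 1 ∈ W :=
    single_mem (hW g _ (single_mem hu hk)) <| by
      rw [DVec_single_apply_zero hD]
      exact mul_ne_zero (mul_ne_zero (sqrt_choose_ne_zero k)
        (pow_ne_zero _ ((map_ne_zero _).mpr hgb))) (pow_ne_zero _ hga)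
  have single_all_mem (j : Fin (n + 1)) : Pi.single j 1 ∈ W :=
    single_mem (hW g _ single_zero_mem) <| by
      rw [DVec_single_zero hD]
      exact mul_ne_zero (mul_ne_zero (sqrt_choose_ne_zero j)
        (pow_ne_zero _ (neg_ne_zero.mpr hgb))) (pow_ne_zero _ hga)
  refine W.eq_top_iff'.mpr fun x => ?_
  rw [pi_eq_sum_univ' x]
  exact W.sum_mem fun j _ => W.smul_mem _ (single_all_mem j)

theorem isIrreducible_wignerRepresentation (hD : IsWigner n D) :
    (wignerRepresentation hD).IsIrreducible where
  exists_pair_ne := ⟨⊥, ⊤, fun heq => bot_ne_top (congrArg Subrepresentation.toSubmodule heq)⟩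
  eq_bot_or_eq_top σ := by
    refine or_iff_not_imp_left.mpr fun hσ => Subrepresentation.toSubmodule_injective <|
      eq_top_of_DVec_mem hD σ.apply_mem_toSubmodule fun hbot => ?_
    exact hσ (Subrepresentation.toSubmodule_injective hbot)

end Irreducibility

section Hyperplane

/-- The orthogonal complement of `w`; it is a complex subspace because `herm` is conjugate-linear
in its first argument. -/
def hyperplane {N : ℕ} (w : Fin N → ℂ) : Submodule ℂ (Fin N → ℂ) where
  carrier := {u | herm u w = 0}
  zero_mem' := by simp [herm]
  add_mem' {x y} (hx : herm x w = 0) (hy : herm y w = 0) := by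
    calc herm (x + y) w = herm x w + herm y w := by simp [herm, add_mul, Finset.sum_add_distrib]
      _ = 0 := by rw [hx, hy, add_zero]
  smul_mem' c x (hx : herm x w = 0) := by
    calc herm (c • x) w = conj c * herm x w := by simp [herm, Finset.mul_sum, mul_assoc]
      _ = 0 := by rw [hx, mul_zero]

lemma hyperplane_ne_top {N : ℕ} {w : Fin N → ℂ} (hw : w ≠ 0) : hyperplane w ≠ ⊤ := by
  intro htop
  obtain ⟨j, hj⟩ := Function.ne_iff.mp hw
  have hsingle : herm (Pi.single j 1) w = 0 := (hyperplane w).eq_top_iff'.mp htop (Pi.single j 1)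
  exact hj (by simpa [herm, Pi.single_apply, apply_ite] using hsingle)

end Hyperplane

/-- for nonzero `v, w ∈ ℂ^{2ℓ+1}` the set `{g ∈ SU(2) : ⟨D^ℓ(g)v, w⟩ = 0}` has
Haar measure zero. -/
theorem wigner_orbit_hyperplane_null (μ : Measure SU2) [μ.IsHaarMeasure]
    [IsProbabilityMeasure μ] (n : ℕ) (D : Fin (n + 1) → Fin (n + 1) → SU2 → ℂ)
    (hD : IsWigner n D) (v w : Fin (n + 1) → ℂ) (hv : v ≠ 0) (hw : w ≠ 0) :
    μ {g : SU2 | herm (DVec D g v) w = 0} = 0 := by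
  have hirr := isIrreducible_wignerRepresentation hD
  have hmeas (U : Submodule ℂ (Fin (n + 1) → ℂ)) :
      MeasurableSet {g | wignerRepresentation hD g v ∈ U} :=
    (U.closed_of_finiteDimensional.preimage (continuous_DVec hD v)).measurableSet
  exact measure_setOf_apply_mem_eq_zero SU2.eq_top_of_finiteIndex hv hmeas (hyperplane_ne_top hw)
end
end
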